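/- Let α ∈ 𝕀 be an irrational power series and (Q_k)_{k≥1} the denominators of its continued fraction convergents. Then α is singular on average if and only if ‖Q_k‖^{1/k} tends to infinity as k → ∞. -/

import Mathlib

/-!
Common setup: the field `𝔽_q((z⁻¹))` of formal power series over a finite field `K` of
cardinality `q`, modeled as the field `FF K` of formal Laurent series in `t = z⁻¹`,
together with its non-Archimedean norm, the embedding of the polynomial ring `𝔽_q[z]`,
distances to polynomial (vectors), Diophantine exponents, `Bad` sets, continued fractions
and best approximation sequences.
-/

open scoped Classical ENNReal NNReal
open Filter

noncomputable section

set_option linter.unusedSectionVars false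

namespace FPSDA

variable (K : Type*) [Field K] [Fintype K]

/-- The field `𝔽_q((z⁻¹))` of formal power series in `z⁻¹` over the finite field `K = 𝔽_q`,
modeled as the field of formal Laurent series in the variable `t = z⁻¹`. -/
def FF : Type _ := LaurentSeries K

instance : Field (FF K) := inferInstanceAs (Field (LaurentSeries K))

variable {K}

/-- The identity map, viewing an element of `𝔽_q((z⁻¹))` as a Laurent series in `t = z⁻¹`. -/
def toL (x : FF K) : LaurentSeries K := x

@[simp] lemma toL_zero : toL (0 : FF K) = 0 := rfl
@[simp] lemma toL_add (x y : FF K) : toL (x + y) = toL x + toL y := rfl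
@[simp] lemma toL_neg (x : FF K) : toL (-x) = -toL x := rfl
@[simp] lemma toL_sub (x y : FF K) : toL (x - y) = toL x - toL y := rfl
lemma toL_eq_zero {x : FF K} : toL x = 0 ↔ x = 0 := Iff.rfl

/-- The norm `‖x‖ = q ^ (deg x)` on `𝔽_q((z⁻¹))`, where
`deg x = - (order of x as a Laurent series in z⁻¹)`; `‖0‖ = 0`. -/
def fnorm (x : FF K) : ℝ :=
  if toL x = 0 then 0 else (Fintype.card K : ℝ) ^ (-(toL x).order)

lemma one_le_q : (1 : ℝ) ≤ (Fintype.card K : ℝ) := by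
  exact_mod_cast Fintype.card_pos

lemma fnorm_nonneg (x : FF K) : 0 ≤ fnorm x := by
  unfold fnorm
  split_ifs
  · exact le_refl 0
  · exact zpow_nonneg (by positivity) _

lemma fnorm_eq_zero {x : FF K} : fnorm x = 0 ↔ x = 0 := by
  unfold fnorm
  split_ifs with h
  · exact ⟨fun _ => toL_eq_zero.mp h, fun _ => rfl⟩
  · constructor
    · intro hc
      exact absurd hc (zpow_ne_zero _ (by
        have h0 : (0:ℝ) < (Fintype.card K : ℝ) := by positivity
        exact ne_of_gt h0))
    · intro hc
      exact absurd (toL_eq_zero.mpr hc) h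

lemma fnorm_neg (x : FF K) : fnorm (-x) = fnorm x := by
  unfold fnorm
  rw [toL_neg]
  simp [neg_eq_zero, HahnSeries.order_neg]

lemma fnorm_add_le (x y : FF K) : fnorm (x + y) ≤ max (fnorm x) (fnorm y) := by
  by_cases hxy : x + y = 0
  · rw [fnorm_eq_zero.mpr hxy]
    exact le_max_of_le_left (fnorm_nonneg x)
  by_cases hx : x = 0
  · rw [hx, zero_add]
    exact le_max_right _ _
  by_cases hy : y = 0
  · rw [hy, add_zero]
    exact le_max_left _ _
  have horder : min (toL x).order (toL y).order ≤ (toL (x + y)).order := by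
    rw [toL_add]
    exact HahnSeries.min_order_le_order_add (show toL x + toL y ≠ 0 from hxy)
  have h1 : fnorm (x + y) = (Fintype.card K : ℝ) ^ (-(toL (x+y)).order) := by
    unfold fnorm
    rw [if_neg (show toL (x + y) ≠ 0 from hxy)]
  rcases le_total (toL x).order (toL y).order with h | h
  · have h2 : (toL x).order ≤ (toL (x+y)).order := le_trans (by simp [min_eq_left h]) horder
    refine le_max_of_le_left ?_
    rw [h1]
    unfold fnorm
    rw [if_neg (show toL x ≠ 0 from hx)]
    exact zpow_le_zpow_right₀ one_le_q (by omega)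
  · have h2 : (toL y).order ≤ (toL (x+y)).order := le_trans (by simp [min_eq_right h]) horder
    refine le_max_of_le_right ?_
    rw [h1]
    unfold fnorm
    rw [if_neg (show toL y ≠ 0 from hy)]
    exact zpow_le_zpow_right₀ one_le_q (by omega)

/-- The (ultra)metric `dist x y = ‖x - y‖` on `𝔽_q((z⁻¹))`. -/
instance : MetricSpace (FF K) where
  dist x y := fnorm (x - y)
  dist_self x := by
    show fnorm (x - x) = 0
    rw [sub_self]
    exact fnorm_eq_zero.mpr rfl
  dist_comm x y := by
    show fnorm (x - y) = fnorm (y - x)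
    have h : x - y = -(y - x) := by ring
    rw [h, fnorm_neg]
  dist_triangle x y z := by
    show fnorm (x - z) ≤ fnorm (x - y) + fnorm (y - z)
    have h : x - z = (x - y) + (y - z) := by ring
    calc fnorm (x - z) ≤ max (fnorm (x - y)) (fnorm (y - z)) := by
          rw [h]; exact fnorm_add_le _ _
      _ ≤ fnorm (x - y) + fnorm (y - z) :=
        max_le (le_add_of_nonneg_right (fnorm_nonneg _)) (le_add_of_nonneg_left (fnorm_nonneg _))
  eq_of_dist_eq_zero := by
    intro x y h
    have h' : x - y = 0 := fnorm_eq_zero.mp h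
    exact sub_eq_zero.mp h'

instance : MeasurableSpace (FF K) := borel _
instance : BorelSpace (FF K) := ⟨rfl⟩

/-- The canonical embedding of the polynomial ring `𝔽_q[z]` into `𝔽_q((z⁻¹))`:
the variable `z` is sent to `t⁻¹ = single (-1) 1`. -/
def polyF (P : Polynomial K) : FF K :=
  Polynomial.aeval (HahnSeries.single (-1 : ℤ) (1 : K)) P

/-- Supremum norm of a vector with entries in `𝔽_q((z⁻¹))`. -/
def vnorm {ι : Type*} [Fintype ι] (v : ι → FF K) : ℝ := ⨆ i, fnorm (v i)

/-- `⟨v⟩`, the distance from the vector `v` to the nearest polynomial vector. -/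
def vdist {ι : Type*} [Fintype ι] (v : ι → FF K) : ℝ :=
  ⨅ y : ι → Polynomial K, vnorm (fun i => v i - polyF (y i))

/-- `⟨x⟩`, the distance from the scalar `x` to the nearest polynomial. -/
def sdist (x : FF K) : ℝ := ⨅ y : Polynomial K, fnorm (x - polyF y)

/-- The fractional part `{x} = Σ_{i ≥ 1} a_i z^{-i}` of `x = Σ_i a_i z^{-i}`. -/
def fracPart (x : FF K) : FF K :=
  (⟨fun i => if 1 ≤ i then (toL x).coeff i else 0, (toL x).isPWO_support'.mono (by
      intro i hi
      by_cases h : (1:ℤ) ≤ i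
      · simpa [Function.mem_support, h] using hi
      · simp [Function.mem_support, h] at hi)⟩ : LaurentSeries K)

/-- The integer part `[x] = Σ_{i ≤ 0} a_i z^{-i}` of `x = Σ_i a_i z^{-i}`, as a polynomial
in `z`. -/
def intPoly (x : FF K) : Polynomial K :=
  ∑ i ∈ Finset.range ((-(toL x).order).toNat + 1),
    Polynomial.monomial i ((toL x).coeff (-(i : ℤ)))

/-- `x ∈ 𝔽_q((z⁻¹))` is irrational if it is not in `𝔽_q(z)`, i.e. is not a ratio of two
polynomials in `z`. -/
def FIrrational (x : FF K) : Prop :=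
  ∀ P Q : Polynomial K, Q ≠ 0 → x * polyF Q ≠ polyF P

section Exponents

variable {m n : ℕ}

/-- The norm `‖x‖ = max_j ‖x_j‖` of a polynomial vector `x`. -/
def pnorm {ι : Type*} [Fintype ι] (x : ι → Polynomial K) : ℝ :=
  vnorm (fun i => (polyF (x i) : FF K))

/-- The system `⟨A x - θ⟩ ≤ H^{-ω}`, `‖x‖ ≤ H` has a polynomial solution `x`. -/
def Solv (A : Matrix (Fin n) (Fin m) (FF K)) (θ : Fin n → FF K) (ω H : ℝ) : Prop :=
  ∃ x : Fin m → Polynomial K,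
    vdist (A.mulVec (fun j => polyF (x j)) - θ) ≤ H ^ (-ω) ∧ pnorm x ≤ H

/-- The system `⟨A x⟩ ≤ H^{-ω}`, `‖x‖ ≤ H` has a nonzero polynomial solution `x`. -/
def SolvHom (A : Matrix (Fin n) (Fin m) (FF K)) (ω H : ℝ) : Prop :=
  ∃ x : Fin m → Polynomial K, x ≠ 0 ∧
    vdist (A.mulVec (fun j => polyF (x j))) ≤ H ^ (-ω) ∧ pnorm x ≤ H

/-- The inhomogeneous exponent `ω(A, θ)`: the supremum (in `[0,∞]`) of all `ω` such that
for arbitrarily large `H` the system `⟨A x - θ⟩ ≤ H^{-ω}`, `‖x‖ ≤ H` has a polynomial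
solution. -/
def omegaInhom (A : Matrix (Fin n) (Fin m) (FF K)) (θ : Fin n → FF K) : ℝ≥0∞ :=
  ⨆ (ω : ℝ) (_ : ∀ H₀ : ℝ, ∃ H : ℝ, H₀ ≤ H ∧ Solv A θ ω H), ENNReal.ofReal ω

/-- The uniform inhomogeneous exponent `ω̂(A, θ)`: as `ω(A, θ)`, but with a solution for
all sufficiently large `H`. -/
def omegaHatInhom (A : Matrix (Fin n) (Fin m) (FF K)) (θ : Fin n → FF K) : ℝ≥0∞ :=
  ⨆ (ω : ℝ) (_ : ∃ H₀ : ℝ, ∀ H : ℝ, H₀ ≤ H → Solv A θ ω H), ENNReal.ofReal ω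

/-- The homogeneous exponent `ω(A)`. -/
def omegaHom (A : Matrix (Fin n) (Fin m) (FF K)) : ℝ≥0∞ :=
  ⨆ (ω : ℝ) (_ : ∀ H₀ : ℝ, ∃ H : ℝ, H₀ ≤ H ∧ SolvHom A ω H), ENNReal.ofReal ω

/-- The uniform homogeneous exponent `ω̂(A)`. -/
def omegaHatHom (A : Matrix (Fin n) (Fin m) (FF K)) : ℝ≥0∞ :=
  ⨆ (ω : ℝ) (_ : ∃ H₀ : ℝ, ∀ H : ℝ, H₀ ≤ H → SolvHom A ω H), ENNReal.ofReal ω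

/-- `A` is non-degenerate: the `𝔽_q[z]`-module `Aᵀ 𝔽_q[z]ⁿ + 𝔽_q[z]^m ⊆ 𝔽_q((z⁻¹))^m` has
rank `m + n` over `𝔽_q[z]`, i.e. its `m + n` natural generators are linearly independent
over `𝔽_q[z]`; equivalently, no nonzero polynomial vector `u` makes `Aᵀ u` a polynomial
vector. -/
def Nondegenerate (A : Matrix (Fin n) (Fin m) (FF K)) : Prop :=
  ∀ u : Fin n → Polynomial K,
    (∃ v : Fin m → Polynomial K,
      A.transpose.mulVec (fun i => polyF (u i)) = fun j => polyF (v j)) → u = 0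

/-- `liminf_{x ∈ 𝔽_q[z]^m, ‖x‖ → ∞} ‖x‖^{m/n} ⟨A x - θ⟩`, computed in `[0, ∞]`. -/
def badLiminf (A : Matrix (Fin n) (Fin m) (FF K)) (θ : Fin n → FF K) : ℝ≥0∞ :=
  Filter.liminf
    (fun x : Fin m → Polynomial K =>
      ENNReal.ofReal ((pnorm x) ^ ((m : ℝ) / (n : ℝ)) *
        vdist (A.mulVec (fun j => polyF (x j)) - θ)))
    (Filter.comap (fun x : Fin m → Polynomial K => pnorm x) Filter.atTop)

/-- The set `Bad^ε(A)` of `θ` in the unit polydisc `𝕀ⁿ` with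
`liminf_{‖x‖ → ∞} ‖x‖^{m/n} ⟨A x - θ⟩ ≥ ε`. -/
def Bad (A : Matrix (Fin n) (Fin m) (FF K)) (ε : ℝ) : Set (Fin n → FF K) :=
  {θ | (∀ i, fnorm (θ i) < 1) ∧ ENNReal.ofReal ε ≤ badLiminf A θ}

/-- The set `Bad(A) = ⋃_{ε > 0} Bad^ε(A)`. -/
def BadAll (A : Matrix (Fin n) (Fin m) (FF K)) : Set (Fin n → FF K) :=
  ⋃ (ε : ℝ) (_ : 0 < ε), Bad A ε

/-- `M(y) = ⟨Aᵀ y⟩` for a polynomial vector `y`. -/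
def Mfun (A : Matrix (Fin n) (Fin m) (FF K)) (y : Fin n → Polynomial K) : ℝ :=
  vdist (A.transpose.mulVec (fun i => polyF (y i)))

/-- `y 1, y 2, …` is a sequence of best approximations related to `Aᵀ`:
`1 = Y_1 < Y_2 < ⋯`, `M_1 > M_2 > ⋯`, and `M(x) ≥ M_k` for every nonzero polynomial
vector `x` with `‖x‖ < Y_{k+1}` (the value `y 0` is irrelevant). -/
def IsBestApproxSeq (A : Matrix (Fin n) (Fin m) (FF K))
    (y : ℕ → Fin n → Polynomial K) : Prop :=
  pnorm (y 1) = 1 ∧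
  (∀ k, 1 ≤ k → pnorm (y k) < pnorm (y (k + 1))) ∧
  (∀ k, 1 ≤ k → Mfun A (y (k + 1)) < Mfun A (y k)) ∧
  (∀ k, 1 ≤ k → ∀ x : Fin n → Polynomial K, x ≠ 0 → pnorm x < pnorm (y (k + 1)) →
    Mfun A (y k) ≤ Mfun A x)

end Exponents

section Scalar

/-- The system `⟨ξ x - θ⟩ ≤ H^{-ω}`, `‖x‖ ≤ H` has a polynomial solution `x`. -/
def sSolv (ξ θ : FF K) (ω H : ℝ) : Prop :=
  ∃ x : Polynomial K, sdist (ξ * polyF x - θ) ≤ H ^ (-ω) ∧ fnorm (polyF x) ≤ H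

/-- The scalar inhomogeneous exponent `ω((ξ), θ)`. -/
def somegaInhom (ξ θ : FF K) : ℝ≥0∞ :=
  ⨆ (ω : ℝ) (_ : ∀ H₀ : ℝ, ∃ H : ℝ, H₀ ≤ H ∧ sSolv ξ θ ω H), ENNReal.ofReal ω

/-- The scalar uniform inhomogeneous exponent `ω̂((ξ), θ)`. -/
def somegaHatInhom (ξ θ : FF K) : ℝ≥0∞ :=
  ⨆ (ω : ℝ) (_ : ∃ H₀ : ℝ, ∀ H : ℝ, H₀ ≤ H → sSolv ξ θ ω H), ENNReal.ofReal ω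

/-- The scalar homogeneous exponent `ω((ξ))`. -/
def somegaHom (ξ : FF K) : ℝ≥0∞ :=
  ⨆ (ω : ℝ) (_ : ∀ H₀ : ℝ, ∃ H : ℝ, H₀ ≤ H ∧ ∃ x : Polynomial K, x ≠ 0 ∧
      sdist (ξ * polyF x) ≤ H ^ (-ω) ∧ fnorm (polyF x) ≤ H), ENNReal.ofReal ω

/-- `liminf_{x ∈ 𝔽_q[z], ‖x‖ → ∞} ‖x‖ ⟨α x - θ⟩`, computed in `[0, ∞]`. -/
def sBadLiminf (α θ : FF K) : ℝ≥0∞ :=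
  Filter.liminf
    (fun x : Polynomial K => ENNReal.ofReal (fnorm (polyF x) * sdist (α * polyF x - θ)))
    (Filter.comap (fun x : Polynomial K => fnorm (polyF x)) Filter.atTop)

/-- The set `Bad^ε(α)` of `θ ∈ 𝕀` with `liminf_{‖x‖ → ∞} ‖x‖ ⟨α x - θ⟩ ≥ ε`. -/
def sBad (α : FF K) (ε : ℝ) : Set (FF K) :=
  {θ | fnorm θ < 1 ∧ ENNReal.ofReal ε ≤ sBadLiminf α θ}

end Scalar

section CF

/-- The Gauss map `T x = 1/x - [1/x]` on `𝔽_q((z⁻¹))`. -/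
def gaussMap (x : FF K) : FF K := fracPart x⁻¹

/-- `pquot α k` is the `(k+1)`-st partial quotient `A_{k+1} = [1 / T^k α]` of the
continued fraction expansion of `α`. -/
def pquot (α : FF K) (k : ℕ) : Polynomial K := intPoly ((gaussMap^[k] α)⁻¹)

/-- `cfQ α k` is the denominator `Q_k` of the `k`-th convergent of the continued fraction
expansion of `α`: `Q_0 = 1`, `Q_1 = A_1`, `Q_{k+2} = A_{k+2} Q_{k+1} + Q_k`. -/
def cfQ (α : FF K) : ℕ → Polynomial K
  | 0 => 1
  | 1 => pquot α 0
  | (k + 2) => pquot α (k + 1) * cfQ α (k + 1) + cfQ α k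

/-- `α` is singular on average: for every `c > 0` the proportion of `l ∈ {1, …, N}` for
which `‖{Q α}‖ ≤ c 2^{-l}` has a solution `Q ∈ 𝔽_q[z]` with `0 < ‖Q‖ ≤ 2^l` tends to `1`
as `N → ∞`. -/
def SingularOnAverage (α : FF K) : Prop :=
  ∀ c : ℝ, 0 < c →
    Filter.Tendsto
      (fun N : ℕ =>
        (((Finset.Icc 1 N).filter (fun l : ℕ =>
            ∃ Q : Polynomial K, Q ≠ 0 ∧ fnorm (polyF Q) ≤ 2 ^ l ∧
              fnorm (fracPart (polyF Q * α)) ≤ c / 2 ^ l)).card : ℝ) / (N : ℝ))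
      Filter.atTop (nhds 1)

end CF

end FPSDA

open FPSDA MeasureTheory

namespace FPSDA
section Aux
variable {K : Type*} [Field K] [Fintype K]

lemma one_lt_q : (1 : ℝ) < (Fintype.card K : ℝ) := by
  exact_mod_cast Fintype.one_lt_card

lemma fnorm_of_ne {x : FF K} (h : x ≠ 0) : fnorm x = (Fintype.card K : ℝ) ^ (-(toL x).order) := by
  unfold fnorm
  rw [if_neg (show toL x ≠ 0 from h)]

lemma fnorm_zero : fnorm (0 : FF K) = 0 := fnorm_eq_zero.mpr rfl

lemma fnorm_pos {x : FF K} (h : x ≠ 0) : 0 < fnorm x :=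
  lt_of_le_of_ne (fnorm_nonneg x) (fun h' => h (fnorm_eq_zero.mp h'.symm))

lemma fnorm_mul (x y : FF K) : fnorm (x * y) = fnorm x * fnorm y := by
  by_cases hx : x = 0
  · simp [hx, fnorm_zero]
  by_cases hy : y = 0
  · simp [hy, fnorm_zero]
  rw [fnorm_of_ne hx, fnorm_of_ne hy, fnorm_of_ne (mul_ne_zero hx hy)]
  have : (toL (x * y)).order = (toL x).order + (toL y).order :=
    HahnSeries.order_mul (x := toL x) (y := toL y) hx hy
  rw [this, ← zpow_add₀ (by have := one_lt_q (K := K); positivity)]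
  congr 1
  ring

lemma fnorm_one : fnorm (1 : FF K) = 1 := by
  have h := fnorm_mul (1 : FF K) 1
  have h0 := fnorm_pos (one_ne_zero : (1 : FF K) ≠ 0)
  rw [mul_one] at h
  exact (mul_eq_left₀ h0.ne').mp h.symm

lemma fnorm_inv (x : FF K) : fnorm x⁻¹ = (fnorm x)⁻¹ := by
  by_cases hx : x = 0
  · simp [hx, fnorm_zero]
  apply eq_inv_of_mul_eq_one_left
  rw [← fnorm_mul, inv_mul_cancel₀ hx, fnorm_one]

lemma fnorm_sub_le (x y : FF K) : fnorm (x - y) ≤ max (fnorm x) (fnorm y) := by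
  rw [sub_eq_add_neg, ← fnorm_neg y]
  exact fnorm_add_le _ _

lemma fnorm_add_eq {x y : FF K} (h : fnorm y < fnorm x) : fnorm (x + y) = fnorm x := by
  apply le_antisymm
  · exact (fnorm_add_le x y).trans (by simp [h.le])
  · by_contra hc
    push Not at hc
    have := fnorm_sub_le (x + y) y
    rw [add_sub_cancel_right] at this
    exact absurd this (not_le.mpr (max_lt hc h))

/-- polyF as a ring hom -/
def polyHom : Polynomial K →+* FF K :=
  (Polynomial.aeval (R := K) (HahnSeries.single (-1 : ℤ) (1 : K)) : Polynomial K →ₐ[K] LaurentSeries K).toRingHom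

lemma polyHom_apply (P : Polynomial K) : polyHom P = polyF P := rfl

lemma polyF_add (P Q : Polynomial K) : polyF (P + Q) = polyF P + polyF Q := map_add polyHom P Q
lemma polyF_sub (P Q : Polynomial K) : polyF (P - Q) = polyF P - polyF Q := map_sub polyHom P Q
lemma polyF_mul (P Q : Polynomial K) : polyF (P * Q) = polyF P * polyF Q := map_mul polyHom P Q
lemma polyF_zero : polyF (0 : Polynomial K) = 0 := map_zero polyHom
lemma polyF_one : polyF (1 : Polynomial K) = 1 := map_one polyHom

lemma polyF_monomial (n : ℕ) (a : K) :
    toL (polyF (Polynomial.monomial n a)) = HahnSeries.single (-(n : ℤ)) a := by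
  show Polynomial.aeval (R := K) (HahnSeries.single (-1 : ℤ) (1 : K) : LaurentSeries K) (Polynomial.monomial n a) = _
  rw [Polynomial.aeval_monomial, HahnSeries.single_pow, one_pow]
  have h : algebraMap K (HahnSeries ℤ K) a = HahnSeries.single 0 a := LaurentSeries.algebraMap_apply K a
  refine (congrArg (fun y => y * HahnSeries.single (n • (-1 : ℤ)) (1 : K)) h).trans ?_
  simp only [HahnSeries.single_mul_single]
  simp

lemma toL_sum {ι : Type*} (s : Finset ι) (f : ι → FF K) :
    toL (∑ i ∈ s, f i) = ∑ i ∈ s, toL (f i) := rfl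

lemma polyF_sum {ι : Type*} (s : Finset ι) (f : ι → Polynomial K) :
    polyF (∑ i ∈ s, f i) = ∑ i ∈ s, polyF (f i) := map_sum polyHom f s

lemma polyF_coeff_neg (P : Polynomial K) (n : ℕ) :
    (toL (polyF P)).coeff (-(n : ℤ)) = P.coeff n := by
  induction P using Polynomial.induction_on' with
  | add p q hp hq => rw [polyF_add, toL_add, HahnSeries.coeff_add, hp, hq, Polynomial.coeff_add]
  | monomial m a =>
    rw [polyF_monomial, HahnSeries.coeff_single, Polynomial.coeff_monomial]
    simp [eq_comm]

lemma polyF_coeff_pos (P : Polynomial K) (n : ℤ) (hn : 1 ≤ n) :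
    (toL (polyF P)).coeff n = 0 := by
  induction P using Polynomial.induction_on' with
  | add p q hp hq => rw [polyF_add, toL_add, HahnSeries.coeff_add, hp, hq, add_zero]
  | monomial m a =>
    rw [polyF_monomial]
    apply HahnSeries.coeff_single_of_ne
    omega

lemma fnorm_polyF {P : Polynomial K} (h : P ≠ 0) :
    fnorm (polyF P) = (Fintype.card K : ℝ) ^ P.natDegree := by
  have hc : (toL (polyF P)).coeff (-(P.natDegree : ℤ)) ≠ 0 := by
    rw [polyF_coeff_neg]
    exact Polynomial.leadingCoeff_ne_zero.mpr h
  have hne : polyF P ≠ 0 := by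
    intro h0
    rw [h0] at hc
    exact hc rfl
  have ho : (toL (polyF P)).order = -(P.natDegree : ℤ) := by
    apply le_antisymm
    · exact HahnSeries.order_le_of_coeff_ne_zero hc
    · by_contra hlt
      push Not at hlt
      have h1 : (toL (polyF P)).coeff (toL (polyF P)).order ≠ 0 := by
        intro h'
        exact hne (HahnSeries.coeff_order_eq_zero.mp h')
      obtain ⟨n, hn⟩ : ∃ n : ℕ, (toL (polyF P)).order = -(n : ℤ) :=
        ⟨(-(toL (polyF P)).order).toNat, by omega⟩
      rw [hn, polyF_coeff_neg] at h1
      have := Polynomial.le_natDegree_of_ne_zero h1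
      omega
  rw [fnorm_of_ne hne, ho, neg_neg, zpow_natCast]

lemma polyF_eq_zero {P : Polynomial K} (h : fnorm (polyF P) < 1) : P = 0 := by
  by_contra h0
  rw [fnorm_polyF h0] at h
  exact absurd h (not_lt.mpr (one_le_pow₀ one_le_q))

lemma fracPart_coeff (x : FF K) (i : ℤ) :
    (toL (fracPart x)).coeff i = if 1 ≤ i then (toL x).coeff i else 0 := rfl

lemma fnorm_fracPart (x : FF K) : fnorm (fracPart x) < 1 := by
  by_cases h : fracPart x = 0
  · rw [h, fnorm_zero]; norm_num
  rw [fnorm_of_ne h]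
  have h1 : (toL (fracPart x)).coeff (toL (fracPart x)).order ≠ 0 := by
    intro h'
    exact h (HahnSeries.coeff_order_eq_zero.mp h')
  have h2 : 1 ≤ (toL (fracPart x)).order := by
    by_contra hc
    rw [fracPart_coeff, if_neg hc] at h1
    exact h1 rfl
  exact zpow_lt_one_of_neg₀ one_lt_q (by omega)

lemma int_add_frac (x : FF K) : x = polyF (intPoly x) + fracPart x := by
  suffices h : toL x = toL (polyF (intPoly x) + fracPart x) from h
  ext i
  rw [toL_add, HahnSeries.coeff_add, fracPart_coeff]
  split_ifs with hi
  · rw [polyF_coeff_pos _ _ hi, zero_add]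
  · obtain ⟨n, rfl⟩ : ∃ n : ℕ, i = -(n : ℤ) := ⟨(-i).toNat, by omega⟩
    rw [polyF_coeff_neg, add_zero, intPoly, Polynomial.finsetSum_coeff]
    simp only [Polynomial.coeff_monomial]
    rw [Finset.sum_ite_eq' (Finset.range _)]
    split_ifs with hm
    · rfl
    · apply HahnSeries.coeff_eq_zero_of_lt_order
      rw [Finset.mem_range] at hm
      omega

lemma fracPart_eq {x : FF K} {P : Polynomial K} (h : fnorm (x - polyF P) < 1) :
    fracPart x = x - polyF P := by
  have h1 := int_add_frac x
  have h2 : P - intPoly x = 0 := by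
    apply polyF_eq_zero
    rw [polyF_sub]
    have : polyF P - polyF (intPoly x) = fracPart x - (x - polyF P) := by
      linear_combination h1
    rw [this]
    exact (fnorm_sub_le _ _).trans_lt (max_lt (fnorm_fracPart x) h)
  rw [sub_eq_zero.mp h2]
  linear_combination (-1 : FF K) * h1

/-! continued fractions -/

lemma FIrrational.ne_zero {x : FF K} (h : FIrrational x) : x ≠ 0 := by
  rintro rfl
  exact h 0 1 one_ne_zero (by rw [polyF_zero, zero_mul])

lemma gauss_irr {x : FF K} (h : FIrrational x) : FIrrational (gaussMap x) := by
  intro P Q hQ he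
  have h1 := int_add_frac x⁻¹
  have hx := h.ne_zero
  have h2 : x * polyF (P + intPoly x⁻¹ * Q) = polyF Q := by
    rw [polyF_add, polyF_mul, ← he]
    unfold gaussMap
    have : x * x⁻¹ = 1 := mul_inv_cancel₀ hx
    linear_combination (-x * polyF Q) * h1 + polyF Q * this
  by_cases h0 : P + intPoly x⁻¹ * Q = 0
  · rw [h0, polyF_zero, mul_zero] at h2
    apply hQ
    apply polyF_eq_zero
    rw [← h2, fnorm_zero]
    norm_num
  · exact h _ _ h0 h2

lemma iter_irr {x : FF K} (h : FIrrational x) (k : ℕ) : FIrrational (gaussMap^[k] x) := by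
  induction k with
  | zero => exact h
  | succ k ih => rw [Function.iterate_succ_apply']; exact gauss_irr ih

lemma iter_lt {x : FF K} (h : fnorm x < 1) (k : ℕ) : fnorm (gaussMap^[k] x) < 1 := by
  cases k with
  | zero => exact h
  | succ k => rw [Function.iterate_succ_apply']; exact fnorm_fracPart _

lemma iter_inv (x : FF K) (k : ℕ) :
    (gaussMap^[k] x)⁻¹ = polyF (pquot x k) + gaussMap^[k+1] x := by
  rw [Function.iterate_succ_apply']
  exact int_add_frac _

lemma fnorm_pquot {x : FF K} (h : fnorm x < 1) (hi : FIrrational x) (k : ℕ) :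
    fnorm (polyF (pquot x k)) = (fnorm (gaussMap^[k] x))⁻¹ := by
  have h1 := iter_inv x k
  have h2 : polyF (pquot x k) = (gaussMap^[k] x)⁻¹ + -gaussMap^[k+1] x := by rw [h1]; ring
  rw [h2, fnorm_add_eq, fnorm_inv]
  rw [fnorm_neg, fnorm_inv]
  exact (iter_lt h _).trans ((one_lt_inv₀ (fnorm_pos (iter_irr hi k).ne_zero)).mpr (iter_lt h k))

lemma one_lt_pquot {x : FF K} (h : fnorm x < 1) (hi : FIrrational x) (k : ℕ) :
    1 < fnorm (polyF (pquot x k)) := by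
  rw [fnorm_pquot h hi]
  exact (one_lt_inv₀ (fnorm_pos (iter_irr hi k).ne_zero)).mpr (iter_lt h k)

lemma fnorm_cfQ {x : FF K} (h : fnorm x < 1) (hi : FIrrational x) (k : ℕ) :
    0 < fnorm (polyF (cfQ x k)) ∧ fnorm (polyF (cfQ x (k+1))) =
      fnorm (polyF (pquot x k)) * fnorm (polyF (cfQ x k)) := by
  induction k with
  | zero =>
    simp [cfQ, polyF_one, fnorm_one]
  | succ k ih =>
    have hp := one_lt_pquot h hi k
    have hp' := one_lt_pquot h hi (k+1)
    have hpos : 0 < fnorm (polyF (cfQ x (k+1))) := by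
      rw [ih.2]; exact mul_pos (by linarith) ih.1
    refine ⟨hpos, ?_⟩
    show fnorm (polyF (pquot x (k + 1) * cfQ x (k + 1) + cfQ x k)) = _
    rw [polyF_add, polyF_mul, fnorm_add_eq, fnorm_mul]
    rw [fnorm_mul]
    nlinarith [ih.1, ih.2]

/-- `E k = Q_k α - P_k` -/
def cfE (x : FF K) : ℕ → FF K
  | 0 => x
  | (k+1) => -(gaussMap^[k+1] x) * cfE x k

lemma cfE_spec {x : FF K} (hi : FIrrational x) (k : ℕ) :
    (∃ P : Polynomial K, polyF (cfQ x k) * x - polyF P = cfE x k) ∧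
    (∃ P : Polynomial K, polyF (cfQ x (k+1)) * x - polyF P = cfE x (k+1)) := by
  induction k with
  | zero =>
    refine ⟨⟨0, by simp [cfQ, polyF_one, polyF_zero, cfE]⟩, ⟨1, ?_⟩⟩
    have h1 := iter_inv x 0
    have h2 : x * x⁻¹ = 1 := mul_inv_cancel₀ hi.ne_zero
    rw [Function.iterate_zero_apply] at h1
    show polyF (pquot x 0) * x - polyF 1 = -(gaussMap^[0+1] x) * x
    rw [polyF_one]
    linear_combination (-x) * h1 + h2
  | succ k ih =>
    refine ⟨ih.2, ?_⟩
    obtain ⟨⟨P, hP⟩, ⟨P', hP'⟩⟩ := ih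
    refine ⟨pquot x (k+1) * P' + P, ?_⟩
    have h1 := iter_inv x (k+1)
    have h2 := mul_inv_cancel₀ (iter_irr hi (k+1)).ne_zero
    show polyF (pquot x (k + 1) * cfQ x (k + 1) + cfQ x k) * x - _ =
      -(gaussMap^[k+1+1] x) * cfE x (k+1)
    have h3 : cfE x (k+1) = -(gaussMap^[k+1] x) * cfE x k := rfl
    rw [polyF_add, polyF_mul, polyF_add, polyF_mul]
    have h4 : gaussMap^[k+1+1] x = (gaussMap^[k+1] x)⁻¹ - polyF (pquot x (k+1)) := by
      rw [h1]; ring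
    rw [h4]
    have h5 : -((gaussMap^[k+1] x)⁻¹ - polyF (pquot x (k+1))) * cfE x (k+1) =
      cfE x k + polyF (pquot x (k+1)) * cfE x (k+1) := by
      linear_combination (-(gaussMap^[k+1] x)⁻¹) * h3 + cfE x k * h2
    rw [h5, ← hP, ← hP']
    ring

lemma cfE_norm {x : FF K} (h : fnorm x < 1) (hi : FIrrational x) (k : ℕ) :
    fnorm (cfE x k) * fnorm (polyF (cfQ x (k+1))) = 1 := by
  induction k with
  | zero =>
    show fnorm x * fnorm (polyF (pquot x 0)) = 1
    rw [fnorm_pquot h hi, Function.iterate_zero_apply,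
      mul_inv_cancel₀ (fnorm_pos hi.ne_zero).ne']
  | succ k ih =>
    show fnorm (-(gaussMap^[k+1] x) * cfE x k) * _ = 1
    rw [(fnorm_cfQ h hi (k+1)).2, fnorm_mul, fnorm_neg, fnorm_pquot h hi]
    have := (fnorm_pos (iter_irr hi (k+1)).ne_zero).ne'
    calc _ = (fnorm (gaussMap^[k+1] x) * (fnorm (gaussMap^[k+1] x))⁻¹) *
        (fnorm (cfE x k) * fnorm (polyF (cfQ x (k+1)))) := by ring
      _ = 1 := by rw [ih, mul_inv_cancel₀ this, one_mul]

lemma cfQ_lt {x : FF K} (h : fnorm x < 1) (hi : FIrrational x) (k : ℕ) :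
    fnorm (polyF (cfQ x k)) < fnorm (polyF (cfQ x (k+1))) := by
  obtain ⟨h1, h2⟩ := fnorm_cfQ h hi k
  have := one_lt_pquot h hi k
  rw [h2]; nlinarith

lemma one_le_cfQ {x : FF K} (h : fnorm x < 1) (hi : FIrrational x) (k : ℕ) :
    1 ≤ fnorm (polyF (cfQ x k)) := by
  induction k with
  | zero => simp [cfQ, polyF_one, fnorm_one]
  | succ k ih => exact ih.trans (cfQ_lt h hi k).le

lemma cfE_lt_one {x : FF K} (h : fnorm x < 1) (hi : FIrrational x) (k : ℕ) :
    fnorm (cfE x k) < 1 := by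
  have h1 := cfE_norm h hi k
  have h2 := (one_le_cfQ h hi k).trans_lt (cfQ_lt h hi k)
  have h3 := fnorm_nonneg (cfE x k)
  by_contra hc
  push Not at hc
  nlinarith

lemma fracPart_cfQ {x : FF K} (h : fnorm x < 1) (hi : FIrrational x) (k : ℕ) :
    fracPart (polyF (cfQ x k) * x) = cfE x k := by
  obtain ⟨P, hP⟩ := (cfE_spec hi k).1
  rw [fracPart_eq (P := P), hP]
  rw [hP]; exact cfE_lt_one h hi k

lemma cross_zero {x : FF K} {Q R : Polynomial K}
    (h1 : fnorm (fracPart (polyF Q * x) * polyF R) < 1)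
    (h2 : fnorm (polyF Q * fracPart (polyF R * x)) < 1) :
    fracPart (polyF Q * x) * polyF R = polyF Q * fracPart (polyF R * x) := by
  have e1 := int_add_frac (polyF Q * x)
  have e2 := int_add_frac (polyF R * x)
  have e : fracPart (polyF Q * x) * polyF R - polyF Q * fracPart (polyF R * x) =
      polyF (Q * intPoly (polyF R * x) - intPoly (polyF Q * x) * R) := by
    rw [polyF_sub, polyF_mul, polyF_mul]
    linear_combination (-polyF R) * e1 + polyF Q * e2
  have h3 : Q * intPoly (polyF R * x) - intPoly (polyF Q * x) * R = 0 := by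
    apply polyF_eq_zero
    rw [← e]
    exact (fnorm_sub_le _ _).trans_lt (max_lt h1 h2)
  rw [h3, polyF_zero] at e
  exact sub_eq_zero.mp e

lemma best_approx {x : FF K} (h : fnorm x < 1) (hi : FIrrational x) (k : ℕ)
    {Q : Polynomial K} (hQ : Q ≠ 0) (hlt : fnorm (polyF Q) < fnorm (polyF (cfQ x (k+1)))) :
    1 ≤ fnorm (fracPart (polyF Q * x)) * fnorm (polyF (cfQ x (k+1))) := by
  by_contra hc
  push Not at hc
  have hE := cfE_norm h hi k
  have hE' := cfE_norm h hi (k+1)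
  have l1 := cfQ_lt h hi k
  have l2 := cfQ_lt h hi (k+1)
  have p0 := one_le_cfQ h hi k
  have n0 := fnorm_nonneg (fracPart (polyF Q * x))
  have n1 := fnorm_nonneg (cfE x k)
  have n2 := fnorm_nonneg (cfE x (k+1))
  have n3 := fnorm_nonneg (polyF Q)
  have e0 : 0 < fnorm (cfE x k) := by
    rcases n1.eq_or_lt with h' | h'
    · rw [← h', zero_mul] at hE; norm_num at hE
    · exact h'
  have e1 : 0 < fnorm (cfE x (k+1)) := by
    rcases n2.eq_or_lt with h' | h'
    · rw [← h', zero_mul] at hE'; norm_num at hE'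
    · exact h'
  have c1 := cross_zero (x := x) (Q := Q) (R := cfQ x k)
    (by rw [fnorm_mul]; nlinarith) (by rw [fracPart_cfQ h hi, fnorm_mul]; nlinarith)
  have c2 := cross_zero (x := x) (Q := Q) (R := cfQ x (k+1))
    (by rw [fnorm_mul]; nlinarith) (by rw [fracPart_cfQ h hi, fnorm_mul]; nlinarith)
  rw [fracPart_cfQ h hi] at c1 c2
  have c3 : polyF Q * (cfE x k * polyF (cfQ x (k+1)) + -(cfE x (k+1) * polyF (cfQ x k))) = 0 := by
    linear_combination (-polyF (cfQ x (k+1))) * c1 + polyF (cfQ x k) * c2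
  have c4 : fnorm (cfE x k * polyF (cfQ x (k+1)) + -(cfE x (k+1) * polyF (cfQ x k))) = 1 := by
    rw [fnorm_add_eq, fnorm_mul, hE]
    rw [fnorm_neg, fnorm_mul, fnorm_mul, hE]
    nlinarith
  have c5 := congrArg fnorm c3
  rw [fnorm_mul, c4, fnorm_zero, mul_one] at c5
  apply hQ
  apply polyF_eq_zero
  rw [c5]; norm_num

/-- degree-like sequence -/
lemma cfQ_pow {x : FF K} (h : fnorm x < 1) (hi : FIrrational x) (k : ℕ) :
    fnorm (polyF (cfQ x k)) = (((Fintype.card K) ^ (cfQ x k).natDegree : ℕ) : ℝ) := by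
  rw [fnorm_polyF]
  · push_cast; rfl
  · intro h0
    have := one_le_cfQ h hi k
    rw [h0, polyF_zero, fnorm_zero] at this
    norm_num at this

end Aux
end FPSDA

namespace FPSDA
section Comb

lemma comb_filter (p : ℕ → Prop) (N : ℕ) :
    (((Finset.Icc 1 N).filter p).card : ℝ) =
      N - (((Finset.Icc 1 N).filter (fun l => ¬ p l)).card : ℝ) := by
  have h := Finset.card_filter_add_card_filter_not (s := Finset.Icc 1 N) p
  rw [Nat.card_Icc, Nat.add_sub_cancel] at h
  have h' : ((((Finset.Icc 1 N).filter p).card +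
    ((Finset.Icc 1 N).filter (fun l => ¬ p l)).card : ℕ) : ℝ) = N := by rw [h]
  push_cast at h'
  linarith

lemma comb_pow_le {X : ℕ → ℕ} (h0 : X 0 = 1) (hX : ∀ k, 2 * X k ≤ X (k + 1)) (k : ℕ) :
    2 ^ k ≤ X k := by
  induction k with
  | zero => simp [h0]
  | succ k ih => rw [pow_succ]; linarith [hX k]

lemma comb_mono {X : ℕ → ℕ} (hX : ∀ k, 2 * X k ≤ X (k + 1)) : Monotone X :=
  monotone_nat_of_le_succ (fun k => by linarith [hX k])

lemma comb_clog_strict {X : ℕ → ℕ} (h0 : X 0 = 1) (hX : ∀ k, 2 * X k ≤ X (k + 1)) :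
    StrictMono (fun k => Nat.clog 2 (X k)) := by
  apply strictMono_nat_of_lt_succ
  intro k
  have h1 : 1 ≤ X k := Nat.one_le_two_pow.trans (comb_pow_le h0 hX k)
  by_contra hc
  push Not at hc
  have h2 : X (k+1) ≤ 2 ^ Nat.clog 2 (X (k+1)) := Nat.le_pow_clog (by norm_num) _
  have h3 : 2 ^ Nat.clog 2 (X (k+1)) ≤ 2 ^ Nat.clog 2 (X k) := Nat.pow_le_pow_right (by norm_num) hc
  by_cases h4 : 1 < X k
  · have h5 := Nat.pow_pred_clog_lt_self (b := 2) (by norm_num) h4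
    have h6 : 0 < Nat.clog 2 (X k) := Nat.clog_pos (by norm_num) h4
    obtain ⟨m, hm⟩ : ∃ m, Nat.clog 2 (X k) = m + 1 := ⟨_, (Nat.succ_pred_eq_of_pos h6).symm⟩
    rw [hm] at h5 h3
    simp only [Nat.pred_succ, pow_succ] at h5 h3
    have := hX k
    omega
  · have h5 : X k = 1 := by omega
    rw [h5] at h3
    have := hX k
    rw [Nat.clog_one_right, pow_zero] at h3
    omega

lemma comb_forward {X : ℕ → ℕ} (h0 : X 0 = 1) (hX : ∀ k, 2 * X k ≤ X (k + 1))
    (h : Tendsto (fun N : ℕ => (((Finset.Icc 1 N).filter (fun l : ℕ =>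
      ∃ k, (X k : ℝ) ≤ 2 ^ l ∧ (2 : ℝ) ^ l ≤ (1/4) * X (k+1))).card : ℝ) / (N : ℝ))
      atTop (nhds 1)) :
    Tendsto (fun k : ℕ => (X k : ℝ) ^ (1 / (k : ℝ))) atTop atTop := by
  have hs := comb_clog_strict h0 hX
  have hmono := comb_mono hX
  rw [tendsto_atTop]
  intro b
  obtain ⟨M, hM⟩ := pow_unbounded_of_one_lt b (one_lt_two : (1 : ℝ) < 2)
  have he : ∀ᶠ N : ℕ in atTop, (1 - 1 / (2 * M + 1) : ℝ) < (((Finset.Icc 1 N).filter (fun l : ℕ =>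
      ∃ k, (X k : ℝ) ≤ 2 ^ l ∧ (2 : ℝ) ^ l ≤ (1/4) * X (k+1))).card : ℝ) / (N : ℝ) :=
    h.eventually_const_lt (by
      have : (0 : ℝ) < 1 / (2 * M + 1) := by positivity
      linarith)
  obtain ⟨N0, hN0⟩ := eventually_atTop.mp he
  filter_upwards [eventually_ge_atTop (N0 + 2)] with k' hk'
  obtain ⟨k, rfl⟩ : ∃ k, k' = k + 1 := ⟨k' - 1, by omega⟩
  have hL : k + 1 ≤ Nat.clog 2 (X (k+1)) := hs.id_le (k+1)
  set L := Nat.clog 2 (X (k+1)) with hLdef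
  have h1 := hN0 L (by omega)
  rw [comb_filter] at h1
  have hbad : k ≤ ((Finset.Icc 1 L).filter (fun l : ℕ =>
      ¬ ∃ k, (X k : ℝ) ≤ 2 ^ l ∧ (2 : ℝ) ^ l ≤ (1/4) * X (k+1))).card := by
    have hc : k = ((Finset.Icc 1 k).image (fun i => Nat.clog 2 (X (i+1)) - 1)).card := by
      rw [Finset.card_image_of_injOn]
      · simp
      · intro i hi j hj hij
        have hi' : i + 1 ≤ Nat.clog 2 (X (i+1)) := hs.id_le (i+1)
        have hj' : j + 1 ≤ Nat.clog 2 (X (j+1)) := hs.id_le (j+1)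
        simp only at hij
        have : Nat.clog 2 (X (i+1)) = Nat.clog 2 (X (j+1)) := by omega
        have := hs.injective this
        omega
    conv_lhs => rw [hc]
    apply Finset.card_le_card
    intro l hl
    rw [Finset.mem_image] at hl
    obtain ⟨i, hi, rfl⟩ := hl
    rw [Finset.mem_Icc] at hi
    have hi' : i + 1 ≤ Nat.clog 2 (X (i+1)) := hs.id_le (i+1)
    have hi2 : Nat.clog 2 (X (i+1)) ≤ L := hs.monotone (by omega : i + 1 ≤ k + 1)
    rw [Finset.mem_filter, Finset.mem_Icc]
    refine ⟨⟨by omega, by omega⟩, ?_⟩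
    rintro ⟨j, hj1, hj2⟩
    have hX1 : 1 < X (i+1) := by
      have := comb_pow_le h0 hX (i+1)
      have h2 : 2 ^ 1 ≤ 2 ^ (i+1) := Nat.pow_le_pow_right (by norm_num) (by omega)
      omega
    have h5 := Nat.pow_pred_clog_lt_self (b := 2) (by norm_num) hX1
    have h6 : X (i+1) ≤ 2 ^ Nat.clog 2 (X (i+1)) := Nat.le_pow_clog (by norm_num) _
    obtain ⟨m, hm⟩ : ∃ m, Nat.clog 2 (X (i+1)) = m + 1 := ⟨Nat.clog 2 (X (i+1)) - 1, by omega⟩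
    rw [hm] at h5 h6 hj1 hj2
    simp only [Nat.pred_succ, Nat.add_sub_cancel] at h5 hj1 hj2
    have hj3 : X j ≤ 2 ^ m := by exact_mod_cast hj1
    have hji : j < i + 1 := by
      by_contra hc
      have := hmono (not_lt.mp hc)
      omega
    have h7 : X (j+1) ≤ X (i+1) := hmono hji
    have h8 : (X (j+1) : ℝ) ≤ 2 ^ (m+1) := by exact_mod_cast h7.trans h6
    rw [pow_succ] at h8
    have : (0 : ℝ) < 2 ^ m := by positivity
    linarith
  set B := ((Finset.Icc 1 L).filter (fun l : ℕ =>
      ¬ ∃ k, (X k : ℝ) ≤ 2 ^ l ∧ (2 : ℝ) ^ l ≤ (1/4) * X (k+1))).card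
  have hLpos : (0 : ℝ) < L := by
    have : 0 < L := by omega
    exact_mod_cast this
  have h2 : ((2 * M + 1) * B : ℝ) < L := by
    have hm : (0 : ℝ) < 2 * M + 1 := by positivity
    rw [lt_div_iff₀ hLpos] at h1
    have h3 : (B : ℝ) < 1 / (2 * M + 1) * L := by linarith
    calc ((2 * M + 1) * B : ℝ) < (2 * M + 1) * (1 / (2 * M + 1) * L) := by gcongr
      _ = L := by field_simp
  have h3 : (2 * M + 1) * B < L := by exact_mod_cast h2
  have h4 : (2 * M + 1) * k < L := lt_of_le_of_lt (Nat.mul_le_mul_left _ hbad) h3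
  have h5 : M * (k + 1) ≤ L - 1 := by
    have : M * 1 ≤ M * k := Nat.mul_le_mul_left _ (by omega)
    have e1 : (2 * M + 1) * k = M * k + M * k + k := by ring
    have e2 : M * (k + 1) = M * k + M := by ring
    omega
  have hX1 : 1 < X (k+1) := by
    have := comb_pow_le h0 hX (k+1)
    have h2 : 2 ^ 1 ≤ 2 ^ (k+1) := Nat.pow_le_pow_right (by norm_num) (by omega)
    omega
  have h6 : 2 ^ (L - 1) < X (k+1) := Nat.pow_pred_clog_lt_self (b := 2) (by norm_num) hX1
  have h7 : 2 ^ (M * (k+1)) ≤ X (k+1) :=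
    (Nat.pow_le_pow_right (by norm_num) h5).trans h6.le
  have h8 : ((2 : ℝ) ^ M) ^ (k+1) ≤ X (k+1) := by
    rw [← pow_mul]; exact_mod_cast h7
  calc b ≤ 2 ^ M := hM.le
    _ = (((2 : ℝ) ^ M) ^ (k+1)) ^ (1 / ((k + 1 : ℕ) : ℝ)) := by
        rw [one_div, Real.pow_rpow_inv_natCast (by positivity) (by omega)]
    _ ≤ _ := Real.rpow_le_rpow (by positivity) h8 (by positivity)

lemma comb_backward {X : ℕ → ℕ} (h0 : X 0 = 1) (hX : ∀ k, 2 * X k ≤ X (k + 1))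
    (h : Tendsto (fun k : ℕ => (X k : ℝ) ^ (1 / (k : ℝ))) atTop atTop) (c : ℝ) (hc : 0 < c) :
    Tendsto (fun N : ℕ => (((Finset.Icc 1 N).filter (fun l : ℕ =>
      ∃ k, (X k : ℝ) ≤ 2 ^ l ∧ (2 : ℝ) ^ l ≤ c * X (k+1))).card : ℝ) / (N : ℝ))
      atTop (nhds 1) := by
  have hmono := comb_mono hX
  obtain ⟨C, hC⟩ : ∃ C : ℕ, (1 : ℝ) ≤ c * 2 ^ C := by
    obtain ⟨C, hC⟩ := pow_unbounded_of_one_lt (1 / c) (one_lt_two : (1 : ℝ) < 2)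
    refine ⟨C, ?_⟩
    rw [div_lt_iff₀ hc] at hC
    linarith
  -- covering of the exceptional set
  have key : ∀ N m : ℕ, 2 ^ N < X m → ((Finset.Icc 1 N).filter (fun l : ℕ =>
      ¬ ∃ k, (X k : ℝ) ≤ 2 ^ l ∧ (2 : ℝ) ^ l ≤ c * X (k+1))).card ≤ m * C := by
    intro N m hm
    have hsub : ((Finset.Icc 1 N).filter (fun l : ℕ =>
      ¬ ∃ k, (X k : ℝ) ≤ 2 ^ l ∧ (2 : ℝ) ^ l ≤ c * X (k+1))) ⊆
        (Finset.range m).biUnion (fun k => Finset.Ico (Nat.clog 2 (X (k+1)) - C)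
          (Nat.clog 2 (X (k+1)))) := by
      intro l hl
      rw [Finset.mem_filter, Finset.mem_Icc] at hl
      obtain ⟨⟨hl1, hl2⟩, hl3⟩ := hl
      have hlm : 2 ^ l < X m := (Nat.pow_le_pow_right (by norm_num) hl2).trans_lt hm
      have hex : ∃ k, 2 ^ l < X k := ⟨m, hlm⟩
      have hf := Nat.find_spec hex
      have hf0 : Nat.find hex ≠ 0 := by
        intro h'
        rw [h', h0] at hf
        have : 1 ≤ 2 ^ l := Nat.one_le_two_pow
        omega
      obtain ⟨k, hk⟩ : ∃ k, Nat.find hex = k + 1 := ⟨Nat.find hex - 1, by omega⟩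
      have hkm : k + 1 ≤ m := hk ▸ Nat.find_min' hex hlm
      have hk2 : X k ≤ 2 ^ l := not_lt.mp (Nat.find_min hex (by omega))
      rw [hk] at hf
      rw [Finset.mem_biUnion]
      refine ⟨k, Finset.mem_range.mpr (by omega), ?_⟩
      rw [Finset.mem_Ico]
      have hup : l < Nat.clog 2 (X (k+1)) := (Nat.lt_clog_iff_pow_lt (by norm_num)).mpr hf
      refine ⟨?_, hup⟩
      by_contra hcon
      apply hl3
      refine ⟨k, by exact_mod_cast hk2, ?_⟩
      have hlt : l + C < Nat.clog 2 (X (k+1)) := by omega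
      have h1 : 2 ^ (l + C) < X (k+1) := (Nat.lt_clog_iff_pow_lt (by norm_num)).mp hlt
      have h2 : (2 : ℝ) ^ l * 2 ^ C ≤ X (k+1) := by
        rw [← pow_add]; exact_mod_cast h1.le
      calc (2 : ℝ) ^ l ≤ 2 ^ l * (c * 2 ^ C) := le_mul_of_one_le_right (by positivity) hC
        _ = c * (2 ^ l * 2 ^ C) := by ring
        _ ≤ _ := by gcongr
    refine (Finset.card_le_card hsub).trans ?_
    refine (Finset.card_biUnion_le_card_mul _ _ C ?_).trans (by simp)
    intro k _
    rw [Nat.card_Ico]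
    omega
  -- main estimate
  have hB : Tendsto (fun N : ℕ => (((Finset.Icc 1 N).filter (fun l : ℕ =>
      ¬ ∃ k, (X k : ℝ) ≤ 2 ^ l ∧ (2 : ℝ) ^ l ≤ c * X (k+1))).card : ℝ) / (N : ℝ))
      atTop (nhds 0) := by
    rw [Metric.tendsto_atTop]
    intro ε hε
    obtain ⟨M0, hM0⟩ := exists_nat_gt (2 * (C : ℝ) / ε)
    set M := M0 + 1 with hM
    have hMpos : (0 : ℝ) < M := by rw [hM]; positivity
    have hMC : (C : ℝ) / M < ε / 2 := by
      rw [div_lt_iff₀ hMpos]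
      rw [div_lt_iff₀ hε] at hM0
      have : (M : ℝ) = M0 + 1 := by rw [hM]; push_cast; rfl
      nlinarith
    obtain ⟨k0, hk0⟩ := eventually_atTop.mp ((tendsto_atTop.mp h) (2 ^ M))
    have hgrow : ∀ k, k0 + 1 ≤ k → 2 ^ (M * k) ≤ X k := by
      intro k hk
      have h1 := hk0 k (by omega)
      have h2 : ((2 : ℝ) ^ M) ^ k ≤ ((X k : ℝ) ^ (1 / (k : ℝ))) ^ k := by gcongr
      rw [one_div, Real.rpow_inv_natCast_pow (by positivity) (by omega), ← pow_mul] at h2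
      exact_mod_cast h2
    obtain ⟨N1, hN1⟩ := exists_nat_gt (2 * ((C : ℝ) * (k0 + 2)) / ε)
    refine ⟨N1 + 1, fun N hN => ?_⟩
    have hNpos : (0 : ℝ) < N := by
      have : 0 < N := by omega
      exact_mod_cast this
    have hk := key N (k0 + 1 + (N / M + 1)) (by
      refine lt_of_lt_of_le ?_ (hgrow _ (Nat.le_add_right _ _))
      apply Nat.pow_lt_pow_right (by norm_num)
      have h3 : N < M * (N / M + 1) := Nat.lt_mul_div_succ N (by omega)
      exact h3.trans_le (Nat.mul_le_mul_left _ (Nat.le_add_left _ _)))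
    set B := ((Finset.Icc 1 N).filter (fun l : ℕ =>
      ¬ ∃ k, (X k : ℝ) ≤ 2 ^ l ∧ (2 : ℝ) ^ l ≤ c * X (k+1))).card
    have hB1 : (B : ℝ) ≤ (k0 + 2 + N / M) * C := by
      have h4 : (B : ℝ) ≤ ((k0 + 1 + (N / M + 1) : ℕ) : ℝ) * C := by exact_mod_cast hk
      have h5 : ((N / M : ℕ) : ℝ) ≤ N / M := Nat.cast_div_le
      push_cast at h4
      refine h4.trans (mul_le_mul_of_nonneg_right (by linarith) (by positivity))
    rw [Real.dist_eq, sub_zero, abs_of_nonneg (by positivity), div_lt_iff₀ hNpos]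
    have h6 : (C : ℝ) * (k0 + 2) < ε / 2 * N := by
      rw [div_lt_iff₀ hε] at hN1
      have : (N1 : ℝ) ≤ N := by exact_mod_cast (by omega : N1 ≤ N)
      nlinarith
    have h7 : (N : ℝ) / M * C ≤ ε / 2 * N := by
      calc (N : ℝ) / M * C = C / M * N := by ring
        _ ≤ _ := by gcongr
    nlinarith
  have h1 : Tendsto (fun N : ℕ => (1 : ℝ) - (((Finset.Icc 1 N).filter (fun l : ℕ =>
      ¬ ∃ k, (X k : ℝ) ≤ 2 ^ l ∧ (2 : ℝ) ^ l ≤ c * X (k+1))).card : ℝ) / (N : ℝ))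
      atTop (nhds 1) := by
    simpa using hB.const_sub 1
  refine h1.congr' ?_
  filter_upwards [eventually_ge_atTop 1] with N hN
  have hNpos : (N : ℝ) ≠ 0 := by
    have : N ≠ 0 := by omega
    exact_mod_cast this
  rw [comb_filter (fun l : ℕ => ∃ k, (X k : ℝ) ≤ 2 ^ l ∧ (2 : ℝ) ^ l ≤ c * X (k+1)),
    sub_div, div_self hNpos]

end Comb

section Final
variable {K : Type*} [Field K] [Fintype K]

lemma good_iff {x : FF K} (h : fnorm x < 1) (hi : FIrrational x) (X : ℕ → ℕ)
    (hXdef : ∀ k, fnorm (polyF (cfQ x k)) = X k) (h0 : X 0 = 1)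
    (hX : ∀ k, 2 * X k ≤ X (k + 1)) (c : ℝ) (l : ℕ) :
    (∃ Q : Polynomial K, Q ≠ 0 ∧ fnorm (polyF Q) ≤ 2 ^ l ∧
      fnorm (fracPart (polyF Q * x)) ≤ c / 2 ^ l) ↔
    ∃ k, (X k : ℝ) ≤ 2 ^ l ∧ (2 : ℝ) ^ l ≤ c * X (k+1) := by
  have h2 : (0 : ℝ) < 2 ^ l := by positivity
  constructor
  · rintro ⟨Q, hQ, hQ1, hQ2⟩
    have hn : fnorm (polyF Q) = ((Fintype.card K ^ Q.natDegree : ℕ) : ℝ) := by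
      rw [fnorm_polyF hQ]; push_cast; rfl
    set n := Fintype.card K ^ Q.natDegree with hndef
    have hn1 : 1 ≤ n := Nat.one_le_pow _ _ Fintype.card_pos
    have hex : ∃ k, n < X k := ⟨n, (Nat.lt_two_pow_self).trans_le (comb_pow_le h0 hX n)⟩
    have hf := Nat.find_spec hex
    have hf0 : Nat.find hex ≠ 0 := by
      intro h'
      rw [h', h0] at hf
      omega
    obtain ⟨k, hk⟩ : ∃ k, Nat.find hex = k + 1 := ⟨Nat.find hex - 1, by omega⟩
    have hk2 : X k ≤ n := not_lt.mp (Nat.find_min hex (by omega))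
    rw [hk] at hf
    refine ⟨k, ?_, ?_⟩
    · have : (X k : ℝ) ≤ n := by exact_mod_cast hk2
      rw [hn] at hQ1
      linarith
    · have hb := best_approx h hi k hQ (by rw [hn, hXdef]; exact_mod_cast hf)
      rw [hXdef] at hb
      rw [le_div_iff₀ h2] at hQ2
      have hp : (0 : ℝ) ≤ X (k+1) := by positivity
      nlinarith
  · rintro ⟨k, hk1, hk2⟩
    have hp : (1 : ℝ) ≤ X (k+1) := by rw [← hXdef]; exact one_le_cfQ h hi _
    refine ⟨cfQ x k, ?_, by rw [hXdef]; exact hk1, ?_⟩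
    · intro h'
      have := one_le_cfQ h hi k
      rw [h', polyF_zero, fnorm_zero] at this
      norm_num at this
    · rw [fracPart_cfQ h hi, le_div_iff₀ h2]
      have hE := cfE_norm h hi k
      rw [hXdef] at hE
      have hE0 := fnorm_nonneg (cfE x k)
      calc fnorm (cfE x k) * 2 ^ l ≤ fnorm (cfE x k) * (c * X (k+1)) := by gcongr
        _ = c * (fnorm (cfE x k) * X (k+1)) := by ring
        _ = c := by rw [hE, mul_one]

lemma main_aux (α : FF K) (hα : fnorm α < 1) (hirr : FIrrational α) :
    SingularOnAverage α ↔
      Filter.Tendsto (fun k : ℕ => fnorm (polyF (cfQ α k)) ^ (1 / (k : ℝ)))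
        Filter.atTop Filter.atTop := by
  obtain ⟨X, hX⟩ : ∃ X : ℕ → ℕ, X = fun k => Fintype.card K ^ (cfQ α k).natDegree := ⟨_, rfl⟩
  have hXdef : ∀ k, fnorm (polyF (cfQ α k)) = X k := by
    intro k; rw [cfQ_pow hα hirr, hX]
  have h0 : X 0 = 1 := by rw [hX]; simp [cfQ]
  have hq : 1 < Fintype.card K := Fintype.one_lt_card
  have h2 : ∀ k, 2 * X k ≤ X (k + 1) := by
    intro k
    have hlt := cfQ_lt hα hirr k
    rw [hXdef, hXdef] at hlt
    have hlt' : X k < X (k+1) := by exact_mod_cast hlt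
    rw [hX] at hlt' ⊢
    have hd := (Nat.pow_lt_pow_iff_right hq).mp hlt'
    calc 2 * Fintype.card K ^ (cfQ α k).natDegree
        ≤ Fintype.card K * Fintype.card K ^ (cfQ α k).natDegree := Nat.mul_le_mul_right _ hq
      _ = Fintype.card K ^ ((cfQ α k).natDegree + 1) := by rw [pow_succ, mul_comm]
      _ ≤ _ := Nat.pow_le_pow_right (by omega) hd
  unfold SingularOnAverage
  simp only [good_iff hα hirr X hXdef h0 h2, hXdef]
  constructor
  · intro h
    exact comb_forward h0 h2 (h (1/4) (by norm_num))
  · intro h c hc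
    exact comb_backward h0 h2 h c hc

end Final
end FPSDA

/-- (Theorem 10.1 of the paper.) An irrational `α ∈ 𝕀` is singular on average if and only
if `‖Q_k‖^{1/k} → ∞`, where `(Q_k)` are the denominators of the continued fraction
convergents of `α`. -/
theorem singular_on_average_iff_growth {K : Type*} [Field K] [Fintype K]
    (α : FF K) (hα : fnorm α < 1) (hirr : FIrrational α) :
    SingularOnAverage α ↔
      Filter.Tendsto (fun k : ℕ => fnorm (polyF (cfQ α k)) ^ (1 / (k : ℝ)))
        Filter.atTop Filter.atTop := by
  exact main_aux α hα hirr
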